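/- Consider any run of the multi-level Adams' method (with arbitrary tie-breaking) on a multi-level apportionment instance. Let h ≥ 1, let a_0 = 0, a_1, …, a_k (listed from the root downwards) be the nodes that receive the h-th seat, and let V denote the allocation after h−1 seats (i.e., just before the h-th seat is allocated). Then V_{a_{j−1}} / R_{a_{j−1}} ≥ V_{a_j} / R_{a_j} for each j ∈ {1,…,k}. -/

import Mathlib

/-- A multi-level apportionment instance: a rooted tree on nodes `0, …, n`
(root `0`, encoded by a parent function with `parent i < i` for `i ≠ 0`),
together with entitlements `W`. -/
structure MLA where
  n : ℕ
  parent : Fin (n + 1) → Fin (n + 1)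
  parent_lt : ∀ i : Fin (n + 1), i ≠ 0 → (parent i : ℕ) < (i : ℕ)
  W : Fin (n + 1) → ℝ
  W_pos : ∀ i, 0 < W i
  W_le_one : ∀ i, W i ≤ 1
  W_root : W 0 = 1
  W_sum : ∀ i : Fin (n + 1),
    (Finset.univ.filter (fun c => c ≠ 0 ∧ parent c = i)).Nonempty →
    ∑ c ∈ Finset.univ.filter (fun c => c ≠ 0 ∧ parent c = i), W c = 1

namespace MLA

variable (T : MLA)

/-- The set of children of node `i`. -/
def children (i : Fin (T.n + 1)) : Finset (Fin (T.n + 1)) :=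
  Finset.univ.filter (fun c => c ≠ 0 ∧ T.parent c = i)

/-- The ancestor set `A(i)`: `A(0) = {0}` and `A(i) = {parent i} ∪ A(parent i)`. -/
def ancestors (i : Fin (T.n + 1)) : Finset (Fin (T.n + 1)) :=
  if h : i = 0 then {0} else insert (T.parent i) (ancestors (T.parent i))
termination_by (i : ℕ)
decreasing_by exact T.parent_lt i h

/-- The entitlement of node `i` relative to the root: `R i = ∏_{a ∈ A(i) ∪ {i}} W a`. -/
def R (i : Fin (T.n + 1)) : ℝ := ∏ a ∈ insert i (T.ancestors i), T.W a

/-- `V` is an allocation of `h` seats. -/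
def IsAlloc (h : ℕ) (V : Fin (T.n + 1) → ℕ) : Prop :=
  V 0 = h ∧ ∀ i, (T.children i).Nonempty → V i = ∑ c ∈ T.children i, V c

/-- `V` fulfills lower quota: `V i ≥ LQ i = max_{a ∈ A(i)} ⌊(R i / R a) · V a⌋`. -/
def FulfillsLowerQuota (V : Fin (T.n + 1) → ℕ) : Prop :=
  ∀ i, ∀ a ∈ T.ancestors i, ⌊T.R i / T.R a * (V a : ℝ)⌋ ≤ (V i : ℤ)

/-- `V` fulfills upper quota: `V i ≤ UQ i = min_{a ∈ A(i)} ⌈(R i / R a) · V a⌉`. -/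
def FulfillsUpperQuota (V : Fin (T.n + 1) → ℕ) : Prop :=
  ∀ i, ∀ a ∈ T.ancestors i, (V i : ℤ) ≤ ⌈T.R i / T.R a * (V a : ℝ)⌉


/-- `P` is the set of nodes receiving the new seat in one step of an iterative
method with selection criterion `crit` (to be minimized among children) and
eligibility constraint `elig`: `P` is a root-to-leaf path, each non-root node on
the path is an eligible child of its parent minimizing `crit` among all eligible
children, and the seat counts along `P` each increase by one. -/
def IsStepWith (crit : (Fin (T.n + 1) → ℕ) → Fin (T.n + 1) → ℝ)
    (elig : (Fin (T.n + 1) → ℕ) → Fin (T.n + 1) → Prop)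
    (P : Finset (Fin (T.n + 1))) (Vh Vh1 : Fin (T.n + 1) → ℕ) : Prop :=
  (0 : Fin (T.n + 1)) ∈ P ∧
  (∀ i ∈ P, i ≠ 0 → T.parent i ∈ P) ∧
  (∀ i ∈ P, (T.children i).Nonempty → ∃ c ∈ T.children i, c ∈ P) ∧
  (∀ c ∈ P, ∀ d ∈ P, c ≠ 0 → d ≠ 0 → T.parent c = T.parent d → c = d) ∧
  (∀ c ∈ P, c ≠ 0 → elig Vh c ∧
    ∀ d ∈ T.children (T.parent c), elig Vh d → crit Vh c ≤ crit Vh d) ∧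
  (∀ i, Vh1 i = Vh i + if i ∈ P then 1 else 0)

/-- `V : ℕ → (nodes → ℕ)` is a run of the iterative method given by `crit` and
`elig` (with arbitrary tie-breaking): `V 0` is the all-zero allocation and each
`V (h+1)` is obtained from `V h` by allocating one more seat along a path. -/
def IsRun (crit : (Fin (T.n + 1) → ℕ) → Fin (T.n + 1) → ℝ)
    (elig : (Fin (T.n + 1) → ℕ) → Fin (T.n + 1) → Prop)
    (V : ℕ → Fin (T.n + 1) → ℕ) : Prop :=
  (∀ i, V 0 i = 0) ∧ ∀ h, ∃ P, T.IsStepWith crit elig P (V h) (V (h + 1))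

/-- Adams' criterion: a child `c` minimizing `V c / R c` receives the seat. -/
noncomputable def adamsCrit (V : Fin (T.n + 1) → ℕ) (c : Fin (T.n + 1)) : ℝ :=
  (V c : ℝ) / T.R c

/-- Jefferson's criterion: a child `c` minimizing `(V c + 1) / R c` receives the seat. -/
noncomputable def jeffersonCrit (V : Fin (T.n + 1) → ℕ) (c : Fin (T.n + 1)) : ℝ :=
  ((V c : ℝ) + 1) / T.R c

/-- Trivial eligibility constraint: every child is eligible. -/
def trivElig (_ : Fin (T.n + 1) → ℕ) (_ : Fin (T.n + 1)) : Prop := True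

/-- Eligibility constraint of the quota method: `V c / W c < V (parent c) + 1`. -/
def quotaElig (V : Fin (T.n + 1) → ℕ) (c : Fin (T.n + 1)) : Prop :=
  (V c : ℝ) / T.W c < (V (T.parent c) : ℝ) + 1

/-- Eligibility constraint of the upper-compliant quota method:
`V c / R c < (V a + 1) / R a` for every ancestor `a` of `c`. -/
def ucElig (V : Fin (T.n + 1) → ℕ) (c : Fin (T.n + 1)) : Prop :=
  ∀ a ∈ T.ancestors c, (V c : ℝ) / T.R c < ((V a : ℝ) + 1) / T.R a

end MLA

namespace MLA

theorem anc_lt (T : MLA) : ∀ (m : ℕ) (i : Fin (T.n + 1)), (i : ℕ) = m → i ≠ 0 →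
    ∀ a ∈ T.ancestors i, (a : ℕ) < (i : ℕ) := by
  intro m
  induction m using Nat.strong_induction_on with
  | _ m ih =>
    intro i him hi a ha
    have hlt := T.parent_lt i hi
    rw [ancestors, dif_neg hi, Finset.mem_insert] at ha
    rcases ha with rfl | ha
    · exact hlt
    · by_cases hp : T.parent i = 0
      · rw [hp, ancestors, dif_pos rfl, Finset.mem_singleton] at ha
        rw [ha, ← hp]
        exact hlt
      · exact (ih _ (him ▸ hlt) (T.parent i) rfl hp a ha).trans hlt

theorem R_eq (T : MLA) (i : Fin (T.n + 1)) (hi : i ≠ 0) :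
    T.R i = T.W i * T.R (T.parent i) := by
  have hn : i ∉ T.ancestors i := fun hm => lt_irrefl _ (anc_lt T _ i rfl hi i hm)
  unfold R
  rw [Finset.prod_insert hn]
  conv_lhs => rw [ancestors, dif_neg hi]

theorem R_pos (T : MLA) (i : Fin (T.n + 1)) : 0 < T.R i :=
  Finset.prod_pos fun a _ => T.W_pos a

theorem run_sum (T : MLA) (V : ℕ → Fin (T.n + 1) → ℕ)
    (hrun : T.IsRun T.adamsCrit T.trivElig V) (h : ℕ) (i : Fin (T.n + 1))
    (hi : (T.children i).Nonempty) : V h i = ∑ c ∈ T.children i, V h c := by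
  induction h with
  | zero => simp [hrun.1]
  | succ h ih =>
    obtain ⟨P, _, h2, h3, h4, _, h6⟩ := hrun.2 h
    simp only [h6, Finset.sum_add_distrib, ← ih]
    congr 1
    by_cases hiP : i ∈ P
    · obtain ⟨c, hc, hcP⟩ := h3 i hiP hi
      have hc' := hc
      simp only [children, Finset.mem_filter, Finset.mem_univ, true_and] at hc'
      rw [Finset.sum_eq_single_of_mem c hc]
      · simp [hiP, hcP]
      · intro d hd hdc
        simp only [children, Finset.mem_filter, Finset.mem_univ, true_and] at hd
        rw [if_neg]
        intro hdP
        exact hdc (h4 d hdP c hcP hd.1 hc'.1 (hd.2.trans hc'.2.symm))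
    · rw [if_neg hiP, Finset.sum_eq_zero]
      intro d hd
      simp only [children, Finset.mem_filter, Finset.mem_univ, true_and] at hd
      rw [if_neg]
      intro hdP
      exact hiP (hd.2 ▸ h2 d hdP hd.1)

end MLA

/-- In any run of the multi-level Adams' method, if `P` is the
root-to-leaf path of nodes receiving the `h`-th seat (`h ≥ 1`) and `V (h-1)` is
the allocation just before, then along the path the ratios `V/R` are
non-increasing: for any non-root `c ∈ P`,
`V^{h-1}_{parent c} / R_{parent c} ≥ V^{h-1}_c / R_c`. -/
theorem adams_path_ratios_decrease (T : MLA) (V : ℕ → Fin (T.n + 1) → ℕ)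
    (hrun : T.IsRun T.adamsCrit T.trivElig V) (h : ℕ) (hh : 1 ≤ h)
    (P : Finset (Fin (T.n + 1)))
    (hP : T.IsStepWith T.adamsCrit T.trivElig P (V (h - 1)) (V h))
    (c : Fin (T.n + 1)) (hc : c ∈ P) (hc0 : c ≠ 0) :
    (V (h - 1) c : ℝ) / T.R c ≤ (V (h - 1) (T.parent c) : ℝ) / T.R (T.parent c) := by
  obtain ⟨_, _, _, _, h5, _⟩ := hP
  have hmem : c ∈ T.children (T.parent c) := by simp [MLA.children, hc0]
  have hne : (T.children (T.parent c)).Nonempty := ⟨c, hmem⟩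
  have hW : ∑ d ∈ T.children (T.parent c), T.W d = 1 := T.W_sum _ hne
  have hR : ∑ d ∈ T.children (T.parent c), T.R d = T.R (T.parent c) := by
    rw [← one_mul (T.R (T.parent c)), ← hW, Finset.sum_mul]
    refine Finset.sum_congr rfl fun d hd => ?_
    simp only [MLA.children, Finset.mem_filter, Finset.mem_univ, true_and] at hd
    rw [MLA.R_eq T d hd.1, hd.2]
  rw [div_le_div_iff₀ (T.R_pos _) (T.R_pos _), T.run_sum V hrun (h - 1) _ hne, ← hR,
    Nat.cast_sum, Finset.mul_sum, Finset.sum_mul]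
  refine Finset.sum_le_sum fun d hd => ?_
  have := (h5 c hc hc0).2 d hd trivial
  unfold MLA.adamsCrit at this
  rwa [div_le_div_iff₀ (T.R_pos _) (T.R_pos _)] at this
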